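/- (Corollary on positive solutions and dependence on parameters.) Assume A1, A2, A3 and A5. For any fixed u ∈ L_M there exists at least one solution x of problem (P_u) with J_u(x) = inf_{y∈E} J_u(y) and x(k) > 0 for all k = 1,...,T. Moreover, let {u_n} ⊂ L_M converge to ū ∈ L_M, and for each n let x_n ∈ E be a positive solution of (P_{u_n}) with J_{u_n}(x_n) = inf_{y∈E} J_{u_n}(y). Then there exist a subsequence {x_{n_i}} and x̄ ∈ E such that x_{n_i} → x̄, J_{ū}(x̄) = inf_{y∈E} J_{ū}(y), x̄(k) > 0 for all k = 1,...,T, and x̄ solves (P_ū). -/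

import Mathlib

/-!
The functional `J_u` is coercive on `E`, uniformly in `u ∈ L_M`: the sign condition A2 makes
`F(k,·,v)` nonincreasing beyond `α` and nondecreasing before `-α`, so `F` is bounded above on
`ℝ × [-M,M]` (`Fint_bddAbove`), and the linear term is absorbed by the quadratic one
(`exists_bound`). Hence all `x ∈ E` with `J_u(x) ≤ J_u(0) = 0` lie in one box that does not depend
on `u`. Compactness of the box gives a minimizer (`exists_minimizer`), and vanishing of the
derivative of `J_u` along each coordinate direction gives the equation (`solves_of_min`).

By A5, a solution satisfies `p(k+1)Δx(k) ≤ p(k)Δx(k-1)`, strictly for some `k`; a discrete maximum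
principle (`pos_of_superharmonic`) then forces `x > 0` on `{1,…,T}`.

For the dependence on parameters, the minimizers `x_n` lie in the same box, so a subsequence
converges. Joint continuity of `F` on `ℝ × [-M,M]` (`tendsto_J`) lets the minimality
inequality pass to the limit; the limit is then a minimizer, hence a solution, hence positive.
-/

open Finset Filter Topology

/-- Membership in the space `E` of functions `x : {0,…,T+1} → ℝ` with zero boundary values. -/
def inE (T : ℕ) (x : ℕ → ℝ) : Prop := x 0 = 0 ∧ x (T + 1) = 0

/-- The norm `‖x‖ = (∑_{k=1}^{T} (x(k+1) − x(k))²)^{1/2}` on `E`. -/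
noncomputable def normE (T : ℕ) (x : ℕ → ℝ) : ℝ :=
  Real.sqrt (∑ k ∈ Finset.Icc 1 T, (x (k + 1) - x k) ^ 2)

/-- The Euclidean norm `|x| = (∑_{k=1}^{T} x(k)²)^{1/2}`. -/
noncomputable def euclE (T : ℕ) (x : ℕ → ℝ) : ℝ :=
  Real.sqrt (∑ k ∈ Finset.Icc 1 T, (x k) ^ 2)

/-- Membership in the parameter set `L_M`. -/
def inLM (T : ℕ) (M : ℝ) (u : ℕ → ℝ) : Prop :=
  ∀ k ∈ Finset.Icc 1 T, |u k| ≤ M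

/-- `F(k,s,v) = ∫₀^s f(k,t,v) dt`. -/
noncomputable def Fint (f : ℕ → ℝ → ℝ → ℝ) (k : ℕ) (s v : ℝ) : ℝ :=
  ∫ t in (0:ℝ)..s, f k t v

/-- The action functional `J_u`. -/
noncomputable def J (T : ℕ) (p g : ℕ → ℝ) (f : ℕ → ℝ → ℝ → ℝ) (u x : ℕ → ℝ) : ℝ :=
  (∑ k ∈ Finset.Icc 1 (T + 1), p k / 2 * (x k - x (k - 1)) ^ 2)
    - (∑ k ∈ Finset.Icc 1 T, Fint f k (x k) (u k))
    + ∑ k ∈ Finset.Icc 1 T, g k * x k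

/-- `x` solves problem `(P_u)`. -/
def SolvesP (T : ℕ) (p g : ℕ → ℝ) (f : ℕ → ℝ → ℝ → ℝ) (u x : ℕ → ℝ) : Prop :=
  inE T x ∧ ∀ k ∈ Finset.Icc 1 T,
    p (k + 1) * (x (k + 1) - x k) - p k * (x k - x (k - 1)) + f k (x k) (u k) = g k

/-- Assumption A1: `f(k,·,·)` continuous on `ℝ × [−M,M]` for each `k = 1,…,T`. -/
def A1 (T : ℕ) (M : ℝ) (f : ℕ → ℝ → ℝ → ℝ) : Prop :=
  ∀ k ∈ Finset.Icc 1 T,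
    ContinuousOn (fun q : ℝ × ℝ => f k q.1 q.2) (Set.univ ×ˢ Set.Icc (-M) M)

/-- Assumption A2. -/
def A2 (T : ℕ) (M : ℝ) (f : ℕ → ℝ → ℝ → ℝ) : Prop :=
  ∃ α > 0, ∀ k ∈ Finset.Icc 1 T, ∀ y v : ℝ, α ≤ |y| → |v| ≤ M → y * f k y v ≤ 0

/-- `m = min_{1≤k≤T+1} p(k)`. -/
noncomputable def mmin (T : ℕ) (p : ℕ → ℝ) : ℝ :=
  (Finset.Icc 1 (T + 1)).inf' (Finset.nonempty_Icc.mpr (Nat.le_add_left 1 T)) p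

/-- Assumption A3: `m = min_{1≤k≤T+1} p(k) > 0`. -/
def A3 (T : ℕ) (p : ℕ → ℝ) : Prop := 0 < mmin T p

/-- Assumption A5. -/
def A5 (T : ℕ) (M : ℝ) (f : ℕ → ℝ → ℝ → ℝ) (g : ℕ → ℝ) : Prop :=
  (∀ k ∈ Finset.Icc 1 T, ∀ y v : ℝ, |v| ≤ M → 0 ≤ f k y v - g k) ∧
    ∃ k₁ ∈ Finset.Icc 1 T, ∀ y v : ℝ, |v| ≤ M → 0 < f k₁ y v - g k₁

/-- `f` with its last argument clamped to `[-M,M]`, so that continuity on `ℝ × [-M,M]` becomes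
continuity on `ℝ × ℝ`. -/
def clampf (M : ℝ) (f : ℕ → ℝ → ℝ → ℝ) (k : ℕ) (t v : ℝ) : ℝ :=
  f k t (max (-M) (min M v))

lemma clampf_eq {M : ℝ} (f : ℕ → ℝ → ℝ → ℝ) (k : ℕ) (t : ℝ) {v : ℝ} (hv : |v| ≤ M) :
    clampf M f k t v = f k t v := by
  rw [abs_le] at hv
  rw [clampf, min_eq_right hv.2, max_eq_right hv.1]

lemma continuous_clampf {T : ℕ} {M : ℝ} (hM : 0 < M) {f : ℕ → ℝ → ℝ → ℝ} (hA1 : A1 T M f)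
    {k : ℕ} (hk : k ∈ Finset.Icc 1 T) :
    Continuous (fun q : ℝ × ℝ => clampf M f k q.1 q.2) := by
  have h := hA1 k hk
  refine h.comp_continuous (f := fun q : ℝ × ℝ => (q.1, max (-M) (min M q.2))) (by fun_prop) ?_
  intro q
  refine ⟨trivial, le_max_left _ _, max_le (by linarith) (min_le_left _ _)⟩

lemma continuous_slice {T : ℕ} {M : ℝ} (hM : 0 < M) {f : ℕ → ℝ → ℝ → ℝ} (hA1 : A1 T M f)
    {k : ℕ} (hk : k ∈ Finset.Icc 1 T) {v : ℝ} (hv : |v| ≤ M) :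
    Continuous (fun t => f k t v) := by
  have h := (continuous_clampf hM hA1 hk).comp (continuous_id.prodMk (continuous_const (y := v)))
  refine h.congr fun t => ?_
  exact clampf_eq f k t hv

lemma Fint_clampf {M : ℝ} (f : ℕ → ℝ → ℝ → ℝ) (k : ℕ) (s : ℝ) {v : ℝ} (hv : |v| ≤ M) :
    Fint (clampf M f) k s v = Fint f k s v := by
  simp only [Fint, clampf_eq f k _ hv]

lemma continuous_Fint_clampf {T : ℕ} {M : ℝ} (hM : 0 < M) {f : ℕ → ℝ → ℝ → ℝ}
    (hA1 : A1 T M f) {k : ℕ} (hk : k ∈ Finset.Icc 1 T) :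
    Continuous (fun q : ℝ × ℝ => Fint (clampf M f) k q.1 q.2) := by
  have hc := continuous_clampf hM hA1 hk
  unfold Fint
  refine intervalIntegral.continuous_parametric_intervalIntegral_of_continuous
    (f := fun (q : ℝ × ℝ) t => clampf M f k t q.2) (s := fun q => q.1) ?_ continuous_fst
  exact hc.comp (by fun_prop : Continuous fun z : (ℝ × ℝ) × ℝ => (z.2, z.1.2))

/-- Under A1 and A2 the primitives `F(k,·,v)` are bounded above uniformly in `k` and `v`. -/
lemma Fint_bddAbove {T : ℕ} {M : ℝ} (hM : 0 < M) {f : ℕ → ℝ → ℝ → ℝ}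
    (hA1 : A1 T M f) (hA2 : A2 T M f) :
    ∃ B : ℕ → ℝ, ∀ k ∈ Finset.Icc 1 T, ∀ s v : ℝ, |v| ≤ M → Fint f k s v ≤ B k := by
  obtain ⟨α, hα, h2⟩ := hA2
  have key : ∀ k, ∃ B : ℝ, k ∈ Finset.Icc 1 T → ∀ s v : ℝ, |v| ≤ M → Fint f k s v ≤ B := by
    intro k
    by_cases hk : k ∈ Finset.Icc 1 T
    swap
    · exact ⟨0, fun h => absurd h hk⟩
    have hcomp : IsCompact (Set.Icc (-α) α ×ˢ Set.Icc (-M) M) := isCompact_Icc.prod isCompact_Icc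
    obtain ⟨B, hB⟩ := hcomp.bddAbove_image (continuous_Fint_clampf hM hA1 hk).continuousOn
    have hB' : ∀ s v : ℝ, |s| ≤ α → |v| ≤ M → Fint f k s v ≤ B := by
      intro s v hs hv
      rw [← Fint_clampf f k s hv]
      exact hB ⟨(s, v), ⟨abs_le.mp hs, abs_le.mp hv⟩, rfl⟩
    refine ⟨B, fun _ s v hv => ?_⟩
    have hint : ∀ a b : ℝ, IntervalIntegrable (fun t => f k t v) MeasureTheory.volume a b :=
      fun a b => (continuous_slice hM hA1 hk hv).intervalIntegrable a b
    rcases le_or_gt |s| α with hs | hs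
    · exact hB' s v hs hv
    rcases lt_abs.mp hs with hs | hs
    · have h1 : Fint f k α v + ∫ t in α..s, f k t v = Fint f k s v :=
        intervalIntegral.integral_add_adjacent_intervals (hint _ _) (hint _ _)
      have h3 : 0 ≤ ∫ t in α..s, -f k t v := by
        refine intervalIntegral.integral_nonneg hs.le fun t ht => ?_
        have := h2 k hk t v (ht.1.trans (le_abs_self t)) hv
        have ht0 : 0 < t := hα.trans_le ht.1
        nlinarith
      rw [intervalIntegral.integral_neg] at h3
      have := hB' α v (abs_of_pos hα).le hv
      linarith
    · have h1 : Fint f k s v + ∫ t in s..(-α), f k t v = Fint f k (-α) v :=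
        intervalIntegral.integral_add_adjacent_intervals (hint _ _) (hint _ _)
      have h3 : 0 ≤ ∫ t in s..(-α), f k t v := by
        refine intervalIntegral.integral_nonneg (by linarith) fun t ht => ?_
        have := h2 k hk t v ((le_neg.mp ht.2).trans (neg_le_abs t)) hv
        have ht0 : t < 0 := by linarith [ht.2]
        nlinarith
      have := hB' (-α) v (by rw [abs_neg, abs_of_pos hα]) hv
      linarith
  choose B hB using key
  exact ⟨B, hB⟩

lemma mmin_le {T : ℕ} {p : ℕ → ℝ} {k : ℕ} (hk : k ∈ Finset.Icc 1 (T + 1)) : mmin T p ≤ p k :=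
  Finset.inf'_le _ hk

/-- A discrete Poincaré inequality, by telescoping and Cauchy–Schwarz. -/
lemma sq_le_energy {T : ℕ} {x : ℕ → ℝ} (hx : x 0 = 0) {k : ℕ} (hk : k ≤ T + 1) :
    x k ^ 2 ≤ (T + 1) * ∑ j ∈ Finset.Icc 1 (T + 1), (x j - x (j - 1)) ^ 2 := by
  have hre : ∑ j ∈ Finset.Icc 1 (T + 1), (x j - x (j - 1)) ^ 2
      = ∑ j ∈ Finset.range (T + 1), (x (j + 1) - x j) ^ 2 := by
    rw [Finset.range_eq_Ico]
    exact (Finset.sum_Ico_add' (fun j => (x j - x (j - 1)) ^ 2) 0 (T + 1) 1).symm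
  have htel : x k = ∑ j ∈ Finset.range k, (x (j + 1) - x j) := by
    rw [Finset.sum_range_sub, hx, sub_zero]
  have hcs := sq_sum_le_card_mul_sum_sq (s := Finset.range k) (f := fun j => x (j + 1) - x j)
  rw [← htel, Finset.card_range] at hcs
  rw [hre]
  refine hcs.trans ?_
  have hk' : (k : ℝ) ≤ T + 1 := by exact_mod_cast hk
  gcongr

lemma sub_sum_le_J {T : ℕ} {M : ℝ} {f : ℕ → ℝ → ℝ → ℝ} {p g B u x : ℕ → ℝ}
    (hB : ∀ k ∈ Finset.Icc 1 T, ∀ s v : ℝ, |v| ≤ M → Fint f k s v ≤ B k) (hu : inLM T M u) :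
    mmin T p / 2 * (∑ j ∈ Finset.Icc 1 (T + 1), (x j - x (j - 1)) ^ 2)
      - ∑ k ∈ Finset.Icc 1 T, B k + ∑ k ∈ Finset.Icc 1 T, g k * x k ≤ J T p g f u x := by
  unfold J
  have h1 : mmin T p / 2 * (∑ j ∈ Finset.Icc 1 (T + 1), (x j - x (j - 1)) ^ 2)
      ≤ ∑ k ∈ Finset.Icc 1 (T + 1), p k / 2 * (x k - x (k - 1)) ^ 2 := by
    rw [Finset.mul_sum]
    refine Finset.sum_le_sum fun k hk => ?_
    have := mmin_le (p := p) hk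
    gcongr
  have h2 : ∑ k ∈ Finset.Icc 1 T, Fint f k (x k) (u k) ≤ ∑ k ∈ Finset.Icc 1 T, B k :=
    Finset.sum_le_sum fun k hk => hB k hk _ _ (hu k hk)
  linarith

/-- Coercivity of `J_u`, uniform in `u ∈ L_M`. -/
lemma exists_bound {T : ℕ} (hT : 1 ≤ T) {M : ℝ} (hM : 0 < M) {f : ℕ → ℝ → ℝ → ℝ}
    {p : ℕ → ℝ} (g : ℕ → ℝ) (hA1 : A1 T M f) (hA2 : A2 T M f) (hA3 : A3 T p) :
    ∃ R : ℝ, 0 ≤ R ∧ ∀ u x : ℕ → ℝ, inLM T M u → inE T x → J T p g f u x ≤ 0 →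
      ∀ k ≤ T + 1, |x k| ≤ R := by
  obtain ⟨B, hB⟩ := Fint_bddAbove hM hA1 hA2
  set m := mmin T p
  have hm : 0 < m := hA3
  have hT' : (0 : ℝ) < T := by exact_mod_cast hT
  -- Young's parameter: it costs exactly half of the available energy `m / 2 * S`.
  set ε : ℝ := m / (4 * T * (T + 1)) with hε
  have hεpos : 0 < ε := by positivity
  set D : ℝ := ∑ k ∈ Finset.Icc 1 T, B k + ∑ k ∈ Finset.Icc 1 T, g k ^ 2 / (4 * ε)
  refine ⟨(T + 1) * (|D| * (4 / m)) + 1, by positivity, ?_⟩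
  intro u x hu hx hJ k hk
  set S := ∑ j ∈ Finset.Icc 1 (T + 1), (x j - x (j - 1)) ^ 2
  have hlow : m / 2 * S - ∑ k ∈ Finset.Icc 1 T, B k + ∑ k ∈ Finset.Icc 1 T, g k * x k
      ≤ J T p g f u x := sub_sum_le_J hB hu
  have hyoung : ∑ k ∈ Finset.Icc 1 T, -(g k * x k)
      ≤ ∑ k ∈ Finset.Icc 1 T, (ε * ((T + 1) * S) + g k ^ 2 / (4 * ε)) := by
    refine Finset.sum_le_sum fun j hj => ?_
    have h1 : x j ^ 2 ≤ (T + 1) * S :=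
      sq_le_energy hx.1 (by have := (Finset.mem_Icc.mp hj).2; omega)
    have h2 : ε * x j ^ 2 + g j ^ 2 / (4 * ε) + g j * x j
        = (2 * ε * x j + g j) ^ 2 / (4 * ε) := by field_simp; ring
    have h3 : 0 ≤ (2 * ε * x j + g j) ^ 2 / (4 * ε) := by positivity
    have h4 : ε * x j ^ 2 ≤ ε * ((T + 1) * S) := by gcongr
    linarith
  rw [Finset.sum_add_distrib, Finset.sum_neg_distrib, Finset.sum_const, Nat.card_Icc,
    nsmul_eq_mul, Nat.add_sub_cancel] at hyoung
  have hq : (T : ℝ) * (ε * ((T + 1) * S)) = m / 4 * S := by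
    rw [hε]; field_simp
  have hS : m / 4 * S ≤ |D| := by
    have : m / 4 * S ≤ D := by simp only [D]; linarith
    exact this.trans (le_abs_self D)
  have hS' : S ≤ |D| * (4 / m) := by
    have h1 : S = m / 4 * S * (4 / m) := by field_simp
    rw [h1]
    gcongr
  have hxk := sq_le_energy hx.1 hk
  have : x k ^ 2 ≤ (T + 1) * (|D| * (4 / m)) := hxk.trans (by gcongr)
  have hP : 0 ≤ (T + 1) * (|D| * (4 / m)) := (sq_nonneg _).trans this
  exact abs_le_of_sq_le_sq (by nlinarith) (by linarith)

/-- `J` depends continuously on the parameter in `L_M` and on the argument, jointly. -/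
lemma tendsto_J {ι : Type*} {l : Filter ι} {T : ℕ} {M : ℝ} (hM : 0 < M)
    {f : ℕ → ℝ → ℝ → ℝ} (p g : ℕ → ℝ) (hA1 : A1 T M f) {un xn : ι → ℕ → ℝ} {u x : ℕ → ℝ}
    (hun : ∀ i, inLM T M (un i)) (hu : inLM T M u)
    (hlu : ∀ k ∈ Finset.Icc 1 T, Tendsto (fun i => un i k) l (𝓝 (u k)))
    (hlx : ∀ k ≤ T + 1, Tendsto (fun i => xn i k) l (𝓝 (x k))) :
    Tendsto (fun i => J T p g f (un i) (xn i)) l (𝓝 (J T p g f u x)) := by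
  unfold J
  refine (Tendsto.sub ?_ ?_).add ?_
  · refine tendsto_finsetSum _ fun k hk => ?_
    rw [Finset.mem_Icc] at hk
    exact (((hlx k hk.2).sub (hlx (k - 1) (by omega))).pow 2).const_mul _
  · refine tendsto_finsetSum _ fun k hk => ?_
    have hk' := Finset.mem_Icc.mp hk
    have h := ((continuous_Fint_clampf hM hA1 hk).tendsto (x k, u k)).comp
      ((hlx k (by omega)).prodMk_nhds (hlu k hk))
    rw [← Fint_clampf f k _ (hu k hk)]
    exact h.congr fun i => Fint_clampf f k _ (hun i k hk)
  · refine tendsto_finsetSum _ fun k hk => ?_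
    have hk' := Finset.mem_Icc.mp hk
    exact (hlx k (by omega)).const_mul _

lemma J_congr {T : ℕ} (p g : ℕ → ℝ) (f : ℕ → ℝ → ℝ → ℝ) (u : ℕ → ℝ) {x y : ℕ → ℝ}
    (h : ∀ k ≤ T + 1, x k = y k) : J T p g f u x = J T p g f u y := by
  unfold J
  congr 1
  · congr 1
    · refine Finset.sum_congr rfl fun k hk => ?_
      rw [Finset.mem_Icc] at hk
      rw [h k hk.2, h (k - 1) (by omega)]
    · refine Finset.sum_congr rfl fun k hk => ?_
      rw [Finset.mem_Icc] at hk
      rw [h k (by omega)]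
  · refine Finset.sum_congr rfl fun k hk => ?_
    rw [Finset.mem_Icc] at hk
    rw [h k (by omega)]

lemma J_zero (T : ℕ) (p g : ℕ → ℝ) (f : ℕ → ℝ → ℝ → ℝ) (u : ℕ → ℝ) :
    J T p g f u (fun _ => 0) = 0 := by
  simp [J, Fint]

/-- The box `[-R,R]^T` inside `E`, with all values off `{1,…,T}` set to zero, which makes it
compact in `ℕ → ℝ`. -/
def box (T : ℕ) (R : ℝ) : Set (ℕ → ℝ) :=
  Set.univ.pi fun k => if k ∈ Finset.Icc 1 T then Set.Icc (-R) R else {0}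

lemma isCompact_box (T : ℕ) (R : ℝ) : IsCompact (box T R) := by
  refine isCompact_univ_pi fun k => ?_
  split_ifs
  · exact isCompact_Icc
  · exact isCompact_singleton

lemma inE_of_mem_box {T : ℕ} {R : ℝ} {x : ℕ → ℝ} (hx : x ∈ box T R) : inE T x := by
  constructor
  · simpa using hx 0 trivial
  · simpa using hx (T + 1) trivial

/-- A bounded element of `E` agrees on `{0,…,T+1}` with an element of the box. -/
lemma exists_mem_box {T : ℕ} {R : ℝ} {x : ℕ → ℝ} (hE : inE T x) (hx : ∀ k ≤ T + 1, |x k| ≤ R) :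
    ∃ y ∈ box T R, ∀ k ≤ T + 1, y k = x k := by
  refine ⟨fun k => if k ∈ Finset.Icc 1 T then x k else 0, fun k _ => ?_, fun k hk => ?_⟩
  · by_cases h : k ∈ Finset.Icc 1 T
    · simp only [if_pos h]
      have := (Finset.mem_Icc.mp h).2
      exact abs_le.mp (hx k (by omega))
    · simp only [if_neg h]
      rfl
  · by_cases h : k ∈ Finset.Icc 1 T
    · simp only [if_pos h]
    · simp only [if_neg h]
      rw [Finset.mem_Icc] at h
      have : k = 0 ∨ k = T + 1 := by omega
      rcases this with rfl | rfl
      · exact hE.1.symm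
      · exact hE.2.symm

lemma exists_minimizer {T : ℕ} (hT : 1 ≤ T) {M : ℝ} (hM : 0 < M) {f : ℕ → ℝ → ℝ → ℝ}
    {p : ℕ → ℝ} (g : ℕ → ℝ) (hA1 : A1 T M f) (hA2 : A2 T M f) (hA3 : A3 T p)
    {u : ℕ → ℝ} (hu : inLM T M u) :
    ∃ x, inE T x ∧ ∀ y, inE T y → J T p g f u x ≤ J T p g f u y := by
  obtain ⟨R, hR, hbd⟩ := exists_bound hT hM g hA1 hA2 hA3
  have hcont : Continuous (fun x : ℕ → ℝ => J T p g f u x) :=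
    continuous_iff_continuousAt.mpr fun x =>
      tendsto_J (un := fun _ => u) (xn := fun x => x) hM p g hA1 (fun _ => hu) hu
        (fun k _ => tendsto_const_nhds) (fun k _ => (continuous_apply k).tendsto x)
  have h0 : (fun _ => 0 : ℕ → ℝ) ∈ box T R := by
    intro k _
    by_cases h : k ∈ Finset.Icc 1 T
    · simp only [if_pos h]
      exact ⟨by linarith, hR⟩
    · simp only [if_neg h]
      rfl
  obtain ⟨x, hx, hmin⟩ := (isCompact_box T R).exists_isMinOn ⟨_, h0⟩ hcont.continuousOn
  refine ⟨x, inE_of_mem_box hx, fun y hy => ?_⟩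
  rcases le_or_gt (J T p g f u y) 0 with h | h
  · obtain ⟨z, hz, hzy⟩ := exists_mem_box hy (hbd u y hu hy h)
    rw [← J_congr p g f u hzy]
    exact hmin hz
  · have h1 : J T p g f u x ≤ J T p g f u (fun _ => 0) := hmin h0
    rw [J_zero] at h1
    linarith

/-- The Euler–Lagrange equation: a minimizer of `J_u` on `E` solves `(P_u)`. -/
lemma solves_of_min {T : ℕ} {M : ℝ} (hM : 0 < M) {f : ℕ → ℝ → ℝ → ℝ}
    {p g : ℕ → ℝ} (hA1 : A1 T M f) {u x : ℕ → ℝ} (hu : inLM T M u) (hx : inE T x)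
    (hmin : ∀ y, inE T y → J T p g f u x ≤ J T p g f u y) : SolvesP T p g f u x := by
  refine ⟨hx, fun k hk => ?_⟩
  have hk' := Finset.mem_Icc.mp hk
  set d : ℕ → ℝ := fun j => if j = k then 1 else 0 with hd
  have hlin : ∀ j, HasDerivAt (fun t : ℝ => x j + t * d j) (d j) 0 := fun j => by
    simpa using ((hasDerivAt_id (0 : ℝ)).mul_const (d j)).const_add (x j)
  have hder : HasDerivAt (fun t : ℝ => J T p g f u (fun j => x j + t * d j))
      ((∑ j ∈ Finset.Icc 1 (T + 1), p j * (x j - x (j - 1)) * (d j - d (j - 1)))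
        - (∑ j ∈ Finset.Icc 1 T, f j (x j) (u j) * d j)
        + ∑ j ∈ Finset.Icc 1 T, g j * d j) 0 := by
    unfold J
    refine (HasDerivAt.sub ?_ ?_).add ?_
    · refine HasDerivAt.fun_sum fun j _ => ?_
      have h := (((hlin j).sub (hlin (j - 1))).pow 2).const_mul (p j / 2)
      refine HasDerivAt.congr_deriv h ?_
      simp
      ring
    · refine HasDerivAt.fun_sum fun j hj => ?_
      have hc := continuous_slice hM hA1 hj (hu j hj)
      have hF : HasDerivAt (fun s => Fint f j s (u j)) (f j (x j) (u j)) (x j + 0 * d j) := by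
        have := (hc.integral_hasStrictDerivAt 0 (x j)).hasDerivAt
        simpa [Fint] using this
      exact hF.comp (0 : ℝ) (hlin j)
    · exact HasDerivAt.fun_sum fun j _ => (hlin j).const_mul (g j)
  have hlocal : IsLocalMin (fun t : ℝ => J T p g f u (fun j => x j + t * d j)) 0 := by
    refine Filter.Eventually.of_forall fun t => ?_
    have h0 : (fun j => x j + 0 * d j) = x := by funext j; ring
    simp only [h0]
    refine hmin _ ⟨?_, ?_⟩
    · have : d 0 = 0 := if_neg (by omega)
      simp [this, hx.1]
    · have : d (T + 1) = 0 := if_neg (by omega)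
      simp [this, hx.2]
  have hz := hlocal.hasDerivAt_eq_zero hder
  have e1 : ∑ j ∈ Finset.Icc 1 (T + 1), p j * (x j - x (j - 1)) * (d j - d (j - 1))
      = p k * (x k - x (k - 1)) - p (k + 1) * (x (k + 1) - x k) := by
    have hsplit : ∀ j ∈ Finset.Icc 1 (T + 1), p j * (x j - x (j - 1)) * (d j - d (j - 1))
        = (if j = k then p j * (x j - x (j - 1)) else 0)
          - (if j = k + 1 then p j * (x j - x (j - 1)) else 0) := by
      intro j hj
      have hj' := Finset.mem_Icc.mp hj
      have : (j - 1 = k) ↔ (j = k + 1) := by omega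
      simp only [hd, this]
      split_ifs <;> ring
    rw [Finset.sum_congr rfl hsplit, Finset.sum_sub_distrib, Finset.sum_ite_eq', Finset.sum_ite_eq',
      if_pos (Finset.mem_Icc.mpr (by omega)), if_pos (Finset.mem_Icc.mpr (by omega)),
      Nat.add_sub_cancel]
  have e2 : ∀ c : ℕ → ℝ, ∑ j ∈ Finset.Icc 1 T, c j * d j = c k := by
    intro c
    simp only [hd, mul_ite, mul_one, mul_zero]
    rw [Finset.sum_ite_eq', if_pos hk]
  rw [e1, e2 (fun j => f j (x j) (u j)), e2 g] at hz
  linarith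

lemma mono_of_step {x : ℕ → ℝ} {a b : ℕ} (h : ∀ j, a ≤ j → j < b → x j ≤ x (j + 1))
    {i j : ℕ} (hi : a ≤ i) (hij : i ≤ j) (hj : j ≤ b) : x i ≤ x j := by
  induction j, hij using Nat.le_induction with
  | base => exact le_rfl
  | succ j hij ih => exact (ih (by omega)).trans (h j (by omega) (by omega))

/-- Discrete strong maximum principle. With `q(k) = p(k)Δx(k-1)` nonincreasing, a point `k` with
`x(k) ≤ 0` forces `q(k+1) ≥ 0`, so `x` increases up to `k` and is zero there; then `q(k+1) = 0`, so
`x` decreases after `k` and vanishes identically, contradicting strictness at `k₁`. -/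
lemma pos_of_superharmonic {T : ℕ} {p x : ℕ → ℝ} (hp : ∀ k ∈ Finset.Icc 1 (T + 1), 0 < p k)
    (hx : inE T x)
    (hle : ∀ k ∈ Finset.Icc 1 T,
      p (k + 1) * (x (k + 1) - x k) ≤ p k * (x k - x (k - 1)))
    (hlt : ∃ k₁ ∈ Finset.Icc 1 T,
      p (k₁ + 1) * (x (k₁ + 1) - x k₁) < p k₁ * (x k₁ - x (k₁ - 1))) :
    ∀ k ∈ Finset.Icc 1 T, 0 < x k := by
  -- Shifted to start at `0`: `q j = p(j+1)(x(j+1) - x(j))` for `0 ≤ j ≤ T`.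
  set q : ℕ → ℝ := fun j => p (j + 1) * (x (j + 1) - x j) with hq
  have hp' : ∀ j ≤ T, 0 < p (j + 1) := fun j hj => hp _ (Finset.mem_Icc.mpr (by omega))
  have hanti : ∀ i j, i ≤ j → j ≤ T → q j ≤ q i := by
    intro i j hij hj
    have := mono_of_step (x := fun j => -q j) (a := 0) (b := T) (fun j _ hj => by
      have := hle (j + 1) (Finset.mem_Icc.mpr (by omega))
      simp only [Nat.add_sub_cancel] at this
      simp only [hq]
      linarith) (Nat.zero_le i) hij hj
    linarith
  intro k hk
  rw [Finset.mem_Icc] at hk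
  by_contra hneg
  rw [not_lt] at hneg
  have hqk : 0 ≤ q k := by
    by_contra hqk
    rw [not_le] at hqk
    have hdec : ∀ j, k ≤ j → j < T + 1 → x (j + 1) < x j := by
      intro j h1 h2
      have h3 : q j < 0 := (hanti k j h1 (by omega)).trans_lt hqk
      have := (pos_iff_neg_of_mul_neg h3).mp (hp' j (by omega))
      linarith
    have h1 := mono_of_step (x := fun j => -x j) (a := k) (b := T + 1)
      (fun j h1 h2 => neg_le_neg (hdec j h1 h2).le) (i := k + 1) (by omega) (by omega) le_rfl
    have h2 := hdec k le_rfl (by omega)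
    have h3 := hx.2
    linarith
  have hup : ∀ i j, i ≤ j → j ≤ k → x i ≤ x j := by
    intro i j hij hj
    refine mono_of_step (a := 0) (b := k) (fun j _ h2 => ?_) (Nat.zero_le i) hij hj
    have h3 : 0 ≤ q j := hqk.trans (hanti j k h2.le hk.2)
    have := nonneg_of_mul_nonneg_right h3 (hp' j (by omega))
    linarith
  have hzero_left : ∀ j ≤ k, x j = 0 := by
    intro j hj
    have h1 := hup 0 j (Nat.zero_le _) hj
    have h2 := hup j k hj le_rfl
    rw [hx.1] at h1
    linarith
  have hqk' : q k ≤ 0 := by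
    have h1 := hanti (k - 1) k (by omega) hk.2
    have h2 : q (k - 1) = 0 := by
      simp only [hq]
      rw [hzero_left (k - 1 + 1) (by omega), hzero_left (k - 1) (by omega)]
      ring
    linarith
  have hdown : ∀ i j, k ≤ i → i ≤ j → j ≤ T + 1 → x j ≤ x i := by
    intro i j hi hij hj
    have := mono_of_step (x := fun j => -x j) (a := k) (b := T + 1) (fun j h1 h2 => by
      have h3 : q j ≤ 0 := (hanti k j h1 (by omega)).trans hqk'
      have h4 : 0 ≤ p (j + 1) * (x j - x (j + 1)) := by simp only [hq] at h3; linarith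
      have := nonneg_of_mul_nonneg_right h4 (hp' j (by omega))
      linarith) hi hij hj
    linarith
  have hzero : ∀ j ≤ T + 1, x j = 0 := by
    intro j hj
    rcases le_total j k with h | h
    · exact hzero_left j h
    · have h1 := hdown k j le_rfl h hj
      have h2 := hdown j (T + 1) h hj le_rfl
      rw [hx.2] at h2
      linarith
  obtain ⟨k₁, hk₁, hlt⟩ := hlt
  rw [Finset.mem_Icc] at hk₁
  rw [hzero (k₁ + 1) (by omega), hzero k₁ (by omega), hzero (k₁ - 1) (by omega)] at hlt
  simp at hlt

lemma pos_of_solves {T : ℕ} {M : ℝ} {f : ℕ → ℝ → ℝ → ℝ} {p g : ℕ → ℝ} (hA3 : A3 T p)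
    (hA5 : A5 T M f g) {u x : ℕ → ℝ} (hu : inLM T M u) (hx : SolvesP T p g f u x) :
    ∀ k ∈ Finset.Icc 1 T, 0 < x k := by
  obtain ⟨hle, k₁, hk₁, hlt⟩ := hA5
  refine pos_of_superharmonic (fun k hk => lt_of_lt_of_le hA3 (mmin_le hk)) hx.1
    (fun k hk => ?_) ⟨k₁, hk₁, ?_⟩
  · have h1 := hx.2 k hk
    have h2 := hle k hk (x k) (u k) (hu k hk)
    linarith
  · have h1 := hx.2 k₁ hk₁
    have h2 := hlt (x k₁) (u k₁) (hu k₁ hk₁)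
    linarith

/-- positive solutions and dependence on parameters: under A1, A2, A3
and A5, for every `u ∈ L_M` there is a positive solution of `(P_u)` minimizing `J_u`;
moreover for parameters `u_n → ū` in `L_M` and positive minimizing solutions `x_n`, a
subsequence converges to a positive `x̄ ∈ E` minimizing `J_ū` and solving `(P_ū)`. -/
theorem dep_param_positive (T : ℕ) (hT : 1 ≤ T) (M : ℝ) (hM : 0 < M)
    (f : ℕ → ℝ → ℝ → ℝ) (p g : ℕ → ℝ)
    (hA1 : A1 T M f) (hA2 : A2 T M f) (hA3 : A3 T p) (hA5 : A5 T M f g) :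
    (∀ u : ℕ → ℝ, inLM T M u → ∃ x : ℕ → ℝ,
      (∀ y : ℕ → ℝ, inE T y → J T p g f u x ≤ J T p g f u y) ∧
      (∀ k ∈ Finset.Icc 1 T, 0 < x k) ∧ SolvesP T p g f u x) ∧
    (∀ (un : ℕ → ℕ → ℝ) (ub : ℕ → ℝ),
      (∀ n, inLM T M (un n)) → inLM T M ub →
      (∀ k ∈ Finset.Icc 1 T, Tendsto (fun n => un n k) atTop (𝓝 (ub k))) →
      ∀ xn : ℕ → ℕ → ℝ,
        (∀ n, SolvesP T p g f (un n) (xn n) ∧ (∀ k ∈ Finset.Icc 1 T, 0 < xn n k) ∧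
          ∀ y : ℕ → ℝ, inE T y → J T p g f (un n) (xn n) ≤ J T p g f (un n) y) →
        ∃ φ : ℕ → ℕ, StrictMono φ ∧ ∃ xb : ℕ → ℝ, inE T xb ∧
          (∀ k ∈ Finset.Icc 1 T, Tendsto (fun i => xn (φ i) k) atTop (𝓝 (xb k))) ∧
          (∀ y : ℕ → ℝ, inE T y → J T p g f ub xb ≤ J T p g f ub y) ∧
          (∀ k ∈ Finset.Icc 1 T, 0 < xb k) ∧ SolvesP T p g f ub xb) := by
  refine ⟨fun u hu => ?_, fun un ub hun hub hlim xn hxn => ?_⟩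
  · obtain ⟨x, hxE, hmin⟩ := exists_minimizer hT hM g hA1 hA2 hA3 hu
    have hsol := solves_of_min hM hA1 hu hxE hmin
    exact ⟨x, hmin, pos_of_solves hA3 hA5 hu hsol, hsol⟩
  · obtain ⟨R, -, hbd⟩ := exists_bound hT hM g hA1 hA2 hA3
    have hbox : ∀ n, ∃ y ∈ box T R, ∀ k ≤ T + 1, y k = xn n k := by
      intro n
      obtain ⟨hsol, -, hmin⟩ := hxn n
      refine exists_mem_box hsol.1 (hbd (un n) (xn n) (hun n) hsol.1 ?_)
      rw [← J_zero T p g f (un n)]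
      exact hmin _ ⟨rfl, rfl⟩
    choose y hy hyx using hbox
    obtain ⟨xb, hxb, φ, hφ, hconv⟩ := (isCompact_box T R).tendsto_subseq hy
    have hlx : ∀ k ≤ T + 1, Tendsto (fun i => xn (φ i) k) atTop (𝓝 (xb k)) := by
      intro k hk
      exact ((tendsto_pi_nhds.mp hconv) k).congr fun i => hyx (φ i) k hk
    have hlu : ∀ k ∈ Finset.Icc 1 T, Tendsto (fun i => un (φ i) k) atTop (𝓝 (ub k)) :=
      fun k hk => (hlim k hk).comp hφ.tendsto_atTop
    have hE := inE_of_mem_box hxb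
    have hmin : ∀ z, inE T z → J T p g f ub xb ≤ J T p g f ub z := by
      intro z hz
      exact le_of_tendsto_of_tendsto'
        (tendsto_J hM p g hA1 (fun i => hun (φ i)) hub hlu hlx)
        (tendsto_J hM p g hA1 (xn := fun _ => z) (fun i => hun (φ i)) hub hlu
          fun _ _ => tendsto_const_nhds)
        fun i => (hxn (φ i)).2.2 z hz
    have hsol := solves_of_min hM hA1 hub hE hmin
    refine ⟨φ, hφ, xb, hE, fun k hk => hlx k ?_, hmin, pos_of_solves hA3 hA5 hub hsol, hsol⟩
    have := (Finset.mem_Icc.mp hk).2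
    omega
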